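/- Let S ⊆ ℝⁿ be an open convex set, let D be a map from S to real symmetric positive definite n×n matrices satisfying the self-concordance inequality on S, and let r : ℝⁿ → ℝⁿ be differentiable on S with Fréchet derivative D(z) at each z ∈ S. Let y ∈ S with ‖−D(y)⁻¹ r(y)‖_{D(y)} ≤ 1/9, suppose the closed ball {z : ‖z − y‖_{D(y)} ≤ 1} is contained in S, and suppose there exists y* ∈ S with r(y*) = 0. Then ‖y* − y‖_{D(y)} ≤ 1/6. -/

import Mathlib

open Matrix

/-- The Hessian norm `‖z‖_H = √(zᵀ H z)` associated with a matrix `H`. -/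
noncomputable def hnorm {ι : Type*} [Fintype ι] (H : Matrix ι ι ℝ) (z : ι → ℝ) : ℝ :=
  Real.sqrt (z ⬝ᵥ H.mulVec z)

/-- A matrix-valued map `D` satisfies the self-concordance inequality on `S`. -/
def SelfConcordantOn {n : ℕ} (S : Set (Fin n → ℝ))
    (D : (Fin n → ℝ) → Matrix (Fin n) (Fin n) ℝ) : Prop :=
  ∀ y₁ ∈ S, ∀ y₂ ∈ S, hnorm (D y₁) (y₂ - y₁) < 1 →
    ∀ v : Fin n → ℝ, hnorm (D y₂) v ≤ hnorm (D y₁) v / (1 - hnorm (D y₁) (y₂ - y₁))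

/-!
Let `h = y* - y`, and let `ρ` be the length of `h` in the Hessian norm at `y`. Self-concordance at
`y + t • h`, applied to the displacement back to `y`, bounds the local length of `h` at that
point from below by `ρ / (1 + t ρ)`. Hence `t ↦ hᵀ r(y + t • h)` has derivative at least
`ρ² / (1 + t ρ)²` on `[0, 1]`, and `-hᵀ r(y) ≥ ρ² / (1 + ρ)`. By Cauchy–Schwarz the left-hand side
is at most `ρ δ`, with `δ` a bound on the length of the Newton step, so that `ρ ≤ δ / (1 - δ)`. The
value `δ = 1/9` gives `ρ ≤ 1/8`.
-/

section HessianNorm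

variable {ι : Type*} [Fintype ι] {H : Matrix ι ι ℝ}

lemma hnorm_nonneg (H : Matrix ι ι ℝ) (z : ι → ℝ) : 0 ≤ hnorm H z :=
  Real.sqrt_nonneg _

lemma hnorm_smul (H : Matrix ι ι ℝ) (c : ℝ) (z : ι → ℝ) : hnorm H (c • z) = |c| * hnorm H z := by
  rw [hnorm, hnorm, mulVec_smul, smul_dotProduct, dotProduct_smul, smul_smul, smul_eq_mul,
    Real.sqrt_mul (mul_self_nonneg c), Real.sqrt_mul_self_eq_abs]

lemma hnorm_pos (hH : H.PosDef) {z : ι → ℝ} (hz : z ≠ 0) : 0 < hnorm H z :=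
  Real.sqrt_pos.2 (by simpa using hH.dotProduct_mulVec_pos hz)

lemma sq_le_dotProduct_mulVec_of_le_hnorm {z : ι → ℝ} {a : ℝ} (ha : 0 < a)
    (h : a ≤ hnorm H z) : a ^ 2 ≤ z ⬝ᵥ H *ᵥ z :=
  (Real.le_sqrt' ha).1 h

lemma dotProduct_mulVec_le_hnorm_mul_hnorm (hH : H.PosSemidef) (x z : ι → ℝ) :
    x ⬝ᵥ H *ᵥ z ≤ hnorm H x * hnorm H z := by
  classical
  have hnonneg (v : ι → ℝ) : 0 ≤ v ⬝ᵥ H *ᵥ v := by simpa using hH.dotProduct_mulVec_nonneg v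
  have hsymm : H.IsSymm := isHermitian_iff_isSymm.1 hH.isHermitian
  have hsq : (x ⬝ᵥ H *ᵥ z) ^ 2 ≤ (x ⬝ᵥ H *ᵥ x) * (z ⬝ᵥ H *ᵥ z) := by
    simpa only [toBilin'_apply'] using LinearMap.BilinForm.apply_sq_le_of_symm H.toBilin'
      (by simpa only [toBilin'_apply'] using hnonneg) ⟨(isSymm_toBilin'_iff_isSymm.2 hsymm).eq⟩ x z
  rw [hnorm, hnorm, ← Real.sqrt_mul (hnonneg x)]
  exact Real.le_sqrt_of_sq_le hsq

lemma neg_dotProduct_le_hnorm_mul_hnorm_newtonStep [DecidableEq ι] (hH : H.PosDef)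
    (x b : ι → ℝ) : -(x ⬝ᵥ b) ≤ hnorm H x * hnorm H (-(H⁻¹ *ᵥ b)) := by
  have hnewton : H *ᵥ (-(H⁻¹ *ᵥ b)) = -b := by
    rw [mulVec_neg, mulVec_mulVec,
      mul_nonsing_inv _ ((isUnit_iff_isUnit_det _).1 hH.isUnit), one_mulVec]
  rw [← dotProduct_neg, ← hnewton]
  exact dotProduct_mulVec_le_hnorm_mul_hnorm hH.posSemidef x _

end HessianNorm

section Calculus

lemma hasDerivWithinAt_dotProduct_comp_add_smul {ι κ : Type*} [Fintype ι] [Fintype κ]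
    {r : (ι → ℝ) → (κ → ℝ)} {A : Matrix κ ι ℝ} {S : Set (ι → ℝ)} {T : Set ℝ} {y h : ι → ℝ} {t : ℝ}
    (hr : HasFDerivWithinAt r A.mulVecLin.toContinuousLinearMap S (y + t • h))
    (hT : Set.MapsTo (fun s : ℝ ↦ y + s • h) T S) (v : κ → ℝ) :
    HasDerivWithinAt (fun s : ℝ ↦ v ⬝ᵥ r (y + s • h)) (v ⬝ᵥ A *ᵥ h) T t := by
  have hline : HasDerivWithinAt (fun s : ℝ ↦ y + s • h) h T t := by
    simpa using ((hasDerivWithinAt_id t T).smul_const h).const_add y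
  have hcomp := hr.comp_hasDerivWithinAt t hline hT
  exact HasDerivWithinAt.fun_sum fun i _ ↦ (hasDerivWithinAt_pi.1 hcomp i).const_mul (v i)

lemma hasDerivAt_neg_div_one_add_mul {ρ t : ℝ} (ht : 1 + t * ρ ≠ 0) :
    HasDerivAt (fun s : ℝ ↦ -(ρ / (1 + s * ρ))) ((ρ / (1 + t * ρ)) ^ 2) t := by
  have hden : HasDerivAt (fun s : ℝ ↦ 1 + s * ρ) ρ t := by
    simpa using ((hasDerivAt_id t).mul_const ρ).const_add 1
  refine ((hasDerivAt_const t ρ).fun_div hden ht).fun_neg.congr_deriv ?_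
  rw [zero_mul, zero_sub, neg_div, neg_neg, ← sq, ← div_pow]

lemma sq_div_one_add_le_sub_of_hasDerivWithinAt {f f' : ℝ → ℝ} {ρ : ℝ} (hρ : 0 ≤ ρ)
    (hf : ∀ t ∈ Set.Icc (0 : ℝ) 1, HasDerivWithinAt f (f' t) (Set.Icc 0 1) t)
    (hf' : ∀ t ∈ Set.Icc (0 : ℝ) 1, (ρ / (1 + t * ρ)) ^ 2 ≤ f' t) :
    ρ ^ 2 / (1 + ρ) ≤ f 1 - f 0 := by
  have hderiv : ∀ t ∈ Set.Icc (0 : ℝ) 1, HasDerivWithinAt (fun s ↦ f s - -(ρ / (1 + s * ρ)))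
      (f' t - (ρ / (1 + t * ρ)) ^ 2) (Set.Icc 0 1) t := fun t ht ↦ by
    have hpos : 0 < 1 + t * ρ := by have := ht.1; positivity
    exact (hf t ht).fun_sub (hasDerivAt_neg_div_one_add_mul hpos.ne').hasDerivWithinAt
  have hmono : MonotoneOn (fun s ↦ f s - -(ρ / (1 + s * ρ))) (Set.Icc 0 1) :=
    monotoneOn_of_hasDerivWithinAt_nonneg (convex_Icc 0 1)
      (fun t ht ↦ (hderiv t ht).continuousWithinAt)
      (fun t ht ↦ (hderiv t (interior_subset ht)).mono interior_subset)
      (fun t ht ↦ sub_nonneg.2 (hf' t (interior_subset ht)))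
  have hends := hmono (Set.left_mem_Icc.2 zero_le_one) (Set.right_mem_Icc.2 zero_le_one) zero_le_one
  have hsplit : ρ ^ 2 / (1 + ρ) = ρ - ρ / (1 + ρ) := by field_simp; ring
  simp only [zero_mul, one_mul, add_zero, div_one] at hends
  linarith

end Calculus

section SelfConcordance

variable {n : ℕ} {S : Set (Fin n → ℝ)} {D : (Fin n → ℝ) → Matrix (Fin n) (Fin n) ℝ}
  {r : (Fin n → ℝ) → (Fin n → ℝ)} {x y : Fin n → ℝ}

lemma SelfConcordantOn.div_one_add_mul_le_hnorm (hSC : SelfConcordantOn S D) (hy : y ∈ S)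
    {h : Fin n → ℝ} {t : ℝ} (ht : 0 ≤ t) (hyt : y + t • h ∈ S) :
    hnorm (D y) h / (1 + t * hnorm (D y) h) ≤ hnorm (D (y + t • h)) h := by
  set ρ := hnorm (D y) h
  set q := hnorm (D (y + t • h)) h
  have hρ : 0 ≤ ρ := hnorm_nonneg _ _
  have hq : 0 ≤ q := hnorm_nonneg _ _
  have hdist : hnorm (D (y + t • h)) (y - (y + t • h)) = t * q := by
    rw [sub_add_cancel_left, ← neg_smul, hnorm_smul, abs_neg, abs_of_nonneg ht]
  rw [div_le_iff₀ (by positivity)]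
  rcases lt_or_ge (t * q) 1 with hnear | hfar
  · have hcomp := hSC _ hyt y hy (hdist ▸ hnear) h
    rw [hdist, le_div_iff₀ (by linarith)] at hcomp
    linarith
  · linarith [mul_le_mul_of_nonneg_right hfar hρ]

lemma SelfConcordantOn.sq_div_one_add_le_dotProduct_sub (hSC : SelfConcordantOn S D)
    (hS : StarConvex ℝ y S) (hPD : (D y).PosDef)
    (hr : ∀ z ∈ S, HasFDerivWithinAt r (D z).mulVecLin.toContinuousLinearMap S z) (hx : x ∈ S) :
    hnorm (D y) (x - y) ^ 2 / (1 + hnorm (D y) (x - y)) ≤ (x - y) ⬝ᵥ (r x - r y) := by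
  rcases eq_or_ne x y with rfl | hxy
  · simp [hnorm]
  set h := x - y with h_def
  have hρ : 0 < hnorm (D y) h := hnorm_pos hPD (sub_ne_zero.2 hxy)
  have hseg : Set.MapsTo (fun t : ℝ ↦ y + t • h) (Set.Icc 0 1) S :=
    fun t ht ↦ hS.add_smul_sub_mem hx ht.1 ht.2
  have hlower : ∀ t ∈ Set.Icc (0 : ℝ) 1,
      (hnorm (D y) h / (1 + t * hnorm (D y) h)) ^ 2 ≤ h ⬝ᵥ D (y + t • h) *ᵥ h := fun t ht ↦
    sq_le_dotProduct_mulVec_of_le_hnorm (by have := ht.1; positivity)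
      (hSC.div_one_add_mul_le_hnorm (hS.mem ⟨x, hx⟩) ht.1 (hseg ht))
  have hincr := sq_div_one_add_le_sub_of_hasDerivWithinAt hρ.le
    (fun t ht ↦ hasDerivWithinAt_dotProduct_comp_add_smul (hr _ (hseg ht)) hseg h) hlower
  simpa [h_def, dotProduct_sub] using hincr

end SelfConcordance

theorem stmt_6_general {n : ℕ} {S : Set (Fin n → ℝ)} {D : (Fin n → ℝ) → Matrix (Fin n) (Fin n) ℝ}
    {r : (Fin n → ℝ) → (Fin n → ℝ)} {y ystar : Fin n → ℝ} {δ : ℝ}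
    (hS : StarConvex ℝ y S) (hPD : (D y).PosDef) (hSC : SelfConcordantOn S D)
    (hr : ∀ z ∈ S, HasFDerivWithinAt r (D z).mulVecLin.toContinuousLinearMap S z)
    (hδ : hnorm (D y) (-((D y)⁻¹ *ᵥ r y)) ≤ δ) (hδ_lt : δ < 1)
    (hystar : ystar ∈ S) (hroot : r ystar = 0) :
    hnorm (D y) (ystar - y) ≤ δ / (1 - δ) := by
  set ρ := hnorm (D y) (ystar - y)
  have hδ_nonneg : 0 ≤ δ := (hnorm_nonneg _ _).trans hδ
  have hδ_sub : 0 < 1 - δ := sub_pos.2 hδ_lt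
  have hρ : 0 ≤ ρ := hnorm_nonneg _ _
  have hbound : ρ ^ 2 / (1 + ρ) ≤ ρ * δ := calc
    ρ ^ 2 / (1 + ρ) ≤ (ystar - y) ⬝ᵥ (r ystar - r y) :=
      hSC.sq_div_one_add_le_dotProduct_sub hS hPD hr hystar
    _ = -((ystar - y) ⬝ᵥ r y) := by rw [hroot, zero_sub, dotProduct_neg]
    _ ≤ ρ * hnorm (D y) (-((D y)⁻¹ *ᵥ r y)) := neg_dotProduct_le_hnorm_mul_hnorm_newtonStep hPD _ _
    _ ≤ ρ * δ := by gcongr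
  rcases hρ.eq_or_lt with hρ_zero | hρ_pos
  · rw [← hρ_zero]
    positivity
  · rw [div_le_iff₀ (by positivity), sq, mul_assoc] at hbound
    rw [le_div_iff₀ hδ_sub]
    linarith [le_of_mul_le_mul_left hbound hρ_pos]

theorem stmt_6 {n : ℕ} (S : Set (Fin n → ℝ)) (hS : Convex ℝ S) (hopen : IsOpen S)
    (D : (Fin n → ℝ) → Matrix (Fin n) (Fin n) ℝ)
    (hPD : ∀ y ∈ S, (D y).PosDef)
    (hSC : SelfConcordantOn S D)
    (r : (Fin n → ℝ) → (Fin n → ℝ))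
    (hr : ∀ z ∈ S,
      HasFDerivWithinAt r ((D z).mulVecLin.toContinuousLinearMap) S z)
    (y : Fin n → ℝ) (hy : y ∈ S)
    -- `n(y) := −D(y)⁻¹ r(y)`, `δ := ‖n(y)‖_{D(y)}`
    (hδ : hnorm (D y) (-(D y)⁻¹.mulVec (r y)) ≤ 1 / 9)
    (hball : {z : Fin n → ℝ | hnorm (D y) (z - y) ≤ 1} ⊆ S)
    (ystar : Fin n → ℝ) (hystar : ystar ∈ S) (hroot : r ystar = 0) :
    hnorm (D y) (ystar - y) ≤ 1 / 6 :=
  (stmt_6_general (hS.starConvex hy) (hPD y hy) hSC hr hδ (by norm_num) hystar hroot).trans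
    (by norm_num)
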